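/- arXiv:2505.10470 — 4 statements merged into one kernel-verified Lean document; each statement's English description precedes it below -/
import Mathlib

section
/- Let n ≥ 2, let c, x ∈ ℝⁿ and r, p > 0 with |c − x| = p + r (tangent balls, i.e. δ = 0), and set v = (p/(p+r))·c + (r/(p+r))·x. Then for w ∈ ℝⁿ with |w| = 1 and b ∈ ℝ, the hyperplane H[w;b] separates the open balls B[c,r] and B[x,p] if and only if w = ±(c − x)/|c − x| and b = ⟪w, v⟫. In particular, exactly one hyperplane (as a set) separates the two balls, namely the hyperplane through v orthogonal to c − x. -/
open MeasureTheory Metric Real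
open scoped RealInnerProductSpace

/-- `H[w;b]` separates `B[c,r]` and `B[x,p]`: the linear functional `u ↦ ⟪w,u⟫ - b`
is positive on one open ball and negative on the other. -/
def Separates {n : ℕ} (w : EuclideanSpace ℝ (Fin n)) (b : ℝ)
    (c : EuclideanSpace ℝ (Fin n)) (r : ℝ)
    (x : EuclideanSpace ℝ (Fin n)) (p : ℝ) : Prop :=
  ((∀ u ∈ ball c r, 0 < ⟪w, u⟫ - b) ∧ (∀ u ∈ ball x p, ⟪w, u⟫ - b < 0)) ∨
  ((∀ u ∈ ball c r, ⟪w, u⟫ - b < 0) ∧ (∀ u ∈ ball x p, 0 < ⟪w, u⟫ - b))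

/-!
For a unit vector `w`, the functional `⟪w, ·⟫` maps the open ball of radius `r` about `c` onto the
interval `(⟪w, c⟫ - r, ⟪w, c⟫ + r)`, so this ball lies above the level `b` and the ball of radius
`p` about `x` below it iff `⟪w, x⟫ + p ≤ b ≤ ⟪w, c⟫ - r`. For tangent balls Cauchy–Schwarz gives
`⟪w, c⟫ - ⟪w, x⟫ ≤ ‖c - x‖ = p + r`, so both inequalities are equalities: `w` is the direction of
`c - x` and `b` is the value of `⟪w, ·⟫` at the point of tangency. The opposite orientation follows
by exchanging the two balls.
-/

section HyperplanesAndBalls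

variable {E : Type*} [NormedAddCommGroup E] [InnerProductSpace ℝ E] {c x w : E} {r p b : ℝ}

lemma forall_mem_ball_lt_inner_iff (hw : w ≠ 0) (hr : 0 < r) :
    (∀ u ∈ ball c r, b < ⟪w, u⟫) ↔ b + r * ‖w‖ ≤ ⟪w, c⟫ := by
  have norm_w_pos : 0 < ‖w‖ := norm_pos_iff.mpr hw
  constructor
  · intro above
    by_contra! hlt
    have center_above : b < ⟪w, c⟫ := above c (mem_ball_self hr)
    -- the orthogonal projection of `c` onto the hyperplane `⟪w, ·⟫ = b`
    set foot : E := c - ((⟪w, c⟫ - b) / ‖w‖ ^ 2) • w with foot_def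
    have inner_foot : ⟪w, foot⟫ = b := by
      rw [foot_def, inner_sub_right, real_inner_smul_right, real_inner_self_eq_norm_sq,
        div_mul_cancel₀ _ (by positivity), sub_sub_cancel]
    have dist_foot : dist foot c = (⟪w, c⟫ - b) / ‖w‖ := by
      rw [dist_eq_norm, foot_def, sub_sub_cancel_left, norm_neg, norm_smul, Real.norm_of_nonneg
        (div_nonneg (sub_nonneg.mpr center_above.le) (sq_nonneg _))]
      field_simp
    have foot_mem : foot ∈ ball c r := by
      rw [mem_ball, dist_foot, div_lt_iff₀ norm_w_pos]
      linarith
    exact (above foot foot_mem).ne' inner_foot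
  · intro hle u hu
    have : ⟪w, c⟫ - ⟪w, u⟫ < r * ‖w‖ := calc
      ⟪w, c⟫ - ⟪w, u⟫ = ⟪w, c - u⟫ := (inner_sub_right _ _ _).symm
      _ ≤ ‖w‖ * ‖c - u‖ := real_inner_le_norm _ _
      _ < ‖w‖ * r := by gcongr; exact mem_ball_iff_norm'.mp hu
      _ = r * ‖w‖ := mul_comm _ _
    linarith

lemma forall_mem_ball_inner_lt_iff (hw : w ≠ 0) (hr : 0 < r) :
    (∀ u ∈ ball c r, ⟪w, u⟫ < b) ↔ ⟪w, c⟫ + r * ‖w‖ ≤ b := by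
  have reflected := forall_mem_ball_lt_inner_iff (c := c) (b := -b) (neg_ne_zero.mpr hw) hr
  simp only [inner_neg_left, neg_lt_neg_iff, norm_neg] at reflected
  rw [reflected, neg_add_le_iff_le_add, ← sub_eq_add_neg, le_sub_iff_add_le, add_comm]

lemma eq_inv_norm_smul_iff_inner_eq_norm {y : E} (hw : ‖w‖ = 1) (hy : y ≠ 0) :
    w = ‖y‖⁻¹ • y ↔ ⟪w, y⟫ = ‖y‖ := by
  rw [eq_inv_smul_iff₀ (norm_ne_zero_iff.mpr hy)]
  simpa only [hw, one_mul, one_smul] using (inner_eq_norm_mul_iff_real (x := w) (y := y)).symm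

lemma inner_tangency_point_eq_sub (hpr : p + r ≠ 0) (hgap : ⟪w, c⟫ - ⟪w, x⟫ = p + r) :
    ⟪w, (p / (p + r)) • c + (r / (p + r)) • x⟫ = ⟪w, c⟫ - r := by
  rw [inner_add_right, real_inner_smul_right, real_inner_smul_right,
    show ⟪w, x⟫ = ⟪w, c⟫ - (p + r) by linarith]
  field_simp
  ring

lemma forall_lt_inner_and_forall_inner_lt_iff_of_norm_sub_eq_add (hr : 0 < r) (hp : 0 < p)
    (htan : ‖c - x‖ = p + r) (hw : ‖w‖ = 1) :
    ((∀ u ∈ ball c r, b < ⟪w, u⟫) ∧ (∀ u ∈ ball x p, ⟪w, u⟫ < b)) ↔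
      w = ‖c - x‖⁻¹ • (c - x) ∧ b = ⟪w, (p / (p + r)) • c + (r / (p + r)) • x⟫ := by
  have hpr : 0 < p + r := by positivity
  have hw0 : w ≠ 0 := norm_ne_zero_iff.mp (hw ▸ one_ne_zero)
  have hcx : c - x ≠ 0 := norm_ne_zero_iff.mp (htan ▸ hpr.ne')
  have gap_le : ⟪w, c⟫ - ⟪w, x⟫ ≤ p + r := by
    simpa only [inner_sub_right, hw, one_mul, htan] using real_inner_le_norm w (c - x)
  rw [forall_mem_ball_lt_inner_iff hw0 hr, forall_mem_ball_inner_lt_iff hw0 hp,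
    eq_inv_norm_smul_iff_inner_eq_norm hw hcx, inner_sub_right, hw, htan, mul_one, mul_one]
  constructor
  · rintro ⟨hc, hx⟩
    have gap_eq : ⟪w, c⟫ - ⟪w, x⟫ = p + r := by linarith
    refine ⟨gap_eq, ?_⟩
    rw [inner_tangency_point_eq_sub hpr.ne' gap_eq]
    linarith
  · rintro ⟨gap_eq, hb⟩
    rw [inner_tangency_point_eq_sub hpr.ne' gap_eq] at hb
    constructor <;> linarith

theorem stmt2_general {v : E} (hr : 0 < r) (hp : 0 < p) (htan : ‖c - x‖ = p + r)
    (hv : v = (p / (p + r)) • c + (r / (p + r)) • x) (hw : ‖w‖ = 1) :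
    (((∀ u ∈ ball c r, b < ⟪w, u⟫) ∧ (∀ u ∈ ball x p, ⟪w, u⟫ < b)) ∨
      ((∀ u ∈ ball c r, ⟪w, u⟫ < b) ∧ (∀ u ∈ ball x p, b < ⟪w, u⟫))) ↔
      (w = ‖c - x‖⁻¹ • (c - x) ∨ w = -(‖c - x‖⁻¹ • (c - x))) ∧ b = ⟪w, v⟫ := by
  have htan_swap : ‖x - c‖ = r + p := by rw [norm_sub_rev, htan, add_comm]
  have hv_swap : v = (r / (r + p)) • x + (p / (r + p)) • c := by rw [hv, add_comm r p, add_comm]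
  have hdir_swap : ‖x - c‖⁻¹ • (x - c) = -(‖c - x‖⁻¹ • (c - x)) := by
    rw [norm_sub_rev, ← smul_neg, neg_sub]
  rw [and_comm (a := ∀ u ∈ ball c r, ⟪w, u⟫ < b),
    forall_lt_inner_and_forall_inner_lt_iff_of_norm_sub_eq_add hr hp htan hw, ← hv,
    forall_lt_inner_and_forall_inner_lt_iff_of_norm_sub_eq_add hp hr htan_swap hw, ← hv_swap,
    hdir_swap, or_and_right]

end HyperplanesAndBalls

theorem stmt2 (n : ℕ) (hn : 2 ≤ n) (c x : EuclideanSpace ℝ (Fin n)) (r p : ℝ)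
    (hr : 0 < r) (hp : 0 < p) (htan : ‖c - x‖ = p + r)
    (v : EuclideanSpace ℝ (Fin n))
    (hv : v = (p / (p + r)) • c + (r / (p + r)) • x)
    (w : EuclideanSpace ℝ (Fin n)) (hw : ‖w‖ = 1) (b : ℝ) :
    Separates w b c r x p ↔
      ((w = ‖c - x‖⁻¹ • (c - x) ∨ w = -(‖c - x‖⁻¹ • (c - x))) ∧ b = ⟪w, v⟫) := by
  simpa only [Separates, sub_pos, sub_neg] using stmt2_general hr hp htan hv hw
end

section
/- Let n ≥ 2, let c, x ∈ ℝⁿ and r, p > 0 with |c − x| > p + r, and let w ∈ ℝⁿ with |w| = 1. Then there exists b ∈ ℝ such that H[w;b] separates B[c,r] and B[x,p] if and only if |⟪w, c − x⟫| ≥ p + r. -/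
open MeasureTheory Metric Real
open scoped RealInnerProductSpace

/-! A nonzero continuous functional `f` maps `ball c r` onto the open interval with centre `f c` and
half-length `r * ‖f‖`. A level `b` separating two balls is a level separating their image
intervals, and it exists exactly when the distance between the interval centres is at least the sum
of the half-lengths. -/

section SeparationOfBalls

variable {E : Type*} [NormedAddCommGroup E] [NormedSpace ℝ E]
  {f : E →L[ℝ] ℝ} {b r p : ℝ} {c x : E}

lemma abs_apply_lt_of_forall_mem_ball_lt_apply (h : ∀ u ∈ ball c r, b < f u) {v : E}
    (hv : ‖v‖ < r) : |f v| < f c - b := by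
  have h_add : b < f (c + v) := h _ (by simpa [mem_ball_iff_norm] using hv)
  have h_sub : b < f (c - v) := h _ (by simpa [mem_ball_iff_norm] using hv)
  rw [map_add] at h_add
  rw [map_sub] at h_sub
  exact abs_lt.2 ⟨by linarith, by linarith⟩

lemma mul_opNorm_le_of_forall_norm_lt {F : Type*} [SeminormedAddCommGroup F] [NormedSpace ℝ F]
    {g : E →L[ℝ] F} {C : ℝ} (hr : 0 < r) (h : ∀ v, ‖v‖ < r → ‖g v‖ ≤ C) : r * ‖g‖ ≤ C := by
  rw [← le_div_iff₀' hr, ← g.sSup_unit_ball_eq_norm]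
  refine csSup_le ((nonempty_ball.2 one_pos).image _) (Set.forall_mem_image.2 fun v hv ↦ ?_)
  have h_scaled : ‖r • v‖ < r := by
    rw [norm_smul, norm_of_nonneg hr.le]
    exact mul_lt_of_lt_one_right hr (mem_ball_zero_iff.1 hv)
  rw [le_div_iff₀' hr]
  calc r * ‖g v‖ = ‖g (r • v)‖ := by rw [map_smul, norm_smul, norm_of_nonneg hr.le]
    _ ≤ C := h _ h_scaled

lemma forall_mem_ball_lt_apply_iff (hf : f ≠ 0) (hr : 0 < r) :
    (∀ u ∈ ball c r, b < f u) ↔ b + r * ‖f‖ ≤ f c := by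
  constructor
  · intro h
    rw [← le_sub_iff_add_le']
    exact mul_opNorm_le_of_forall_norm_lt hr fun v hv ↦
      (abs_apply_lt_of_forall_mem_ball_lt_apply h hv).le
  · intro h u hu
    have h_le : f (c - u) ≤ ‖f‖ * ‖c - u‖ := (le_abs_self _).trans (f.le_opNorm _)
    have h_lt : ‖f‖ * ‖c - u‖ < ‖f‖ * r :=
      mul_lt_mul_of_pos_left (mem_ball_iff_norm'.1 hu) (norm_pos_iff.2 hf)
    rw [map_sub] at h_le
    linarith

lemma forall_mem_ball_apply_lt_iff (hf : f ≠ 0) (hr : 0 < r) :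
    (∀ u ∈ ball c r, f u < b) ↔ f c + r * ‖f‖ ≤ b := by
  have h := forall_mem_ball_lt_apply_iff (b := -b) (c := c) (neg_ne_zero.2 hf) hr
  simp only [neg_apply, neg_lt_neg_iff, norm_neg] at h
  rw [h, neg_add_le_iff_le_add, ← sub_eq_add_neg, le_sub_iff_add_le']

lemma exists_forall_mem_ball_lt_apply_and_apply_lt_iff
    (hf : f ≠ 0) (hr : 0 < r) (hp : 0 < p) :
    (∃ b, (∀ u ∈ ball c r, b < f u) ∧ ∀ u ∈ ball x p, f u < b) ↔
      (p + r) * ‖f‖ ≤ f (c - x) := by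
  simp only [forall_mem_ball_lt_apply_iff hf hr, forall_mem_ball_apply_lt_iff hf hp, map_sub]
  constructor
  · rintro ⟨b, hb_c, hb_x⟩
    linarith
  · intro h
    exact ⟨f x + p * ‖f‖, by linarith, le_rfl⟩

theorem stmt5_general (hf : f ≠ 0) (hr : 0 < r) (hp : 0 < p) :
    (∃ b, ((∀ u ∈ ball c r, b < f u) ∧ ∀ u ∈ ball x p, f u < b) ∨
      ((∀ u ∈ ball c r, f u < b) ∧ ∀ u ∈ ball x p, b < f u)) ↔
      (p + r) * ‖f‖ ≤ |f (c - x)| := by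
  rw [exists_or, exists_forall_mem_ball_lt_apply_and_apply_lt_iff hf hr hp]
  simp only [and_comm (a := ∀ u ∈ ball c r, f u < _)]
  rw [exists_forall_mem_ball_lt_apply_and_apply_lt_iff hf hp hr, le_abs, ← map_neg,
    neg_sub, add_comm r p]

end SeparationOfBalls

theorem stmt5 (n : ℕ) (hn : 2 ≤ n) (c x : EuclideanSpace ℝ (Fin n)) (r p : ℝ)
    (hr : 0 < r) (hp : 0 < p) (hdist : p + r < ‖c - x‖)
    (w : EuclideanSpace ℝ (Fin n)) (hw : ‖w‖ = 1) :
    (∃ b : ℝ, Separates w b c r x p) ↔ p + r ≤ |⟪w, c - x⟫| := by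
  have hf : innerSL ℝ w ≠ 0 := norm_ne_zero_iff.1 (by simp [hw])
  simpa [Separates, hw] using stmt5_general (c := c) (x := x) hf hr hp
end

section
/- Let n ≥ 2, let c, x ∈ ℝⁿ and r, p > 0 with |c − x| = p + r + δ for some δ > 0, and let 𝔴 be uniformly distributed on the unit sphere S^{n−1} ⊂ ℝⁿ. Set 𝒬 = 1 − ((p+r)/(p+r+δ))² and v = (p/(p+r))·c + (r/(p+r))·x. Then the probability that there exists b ∈ ℝ such that H[𝔴;b] separates B[c,r] and B[x,p] equals I(𝒬; (n−1)/2, 1/2), and this also equals the probability that the hyperplane H[𝔴; ⟪𝔴,v⟫] through v separates B[c,r] and B[x,p]. -/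
open MeasureTheory Metric Real
open scoped RealInnerProductSpace

/-- The Beta function `B(y,z) = Γ(y)Γ(z)/Γ(y+z)`. -/
noncomputable def realBeta (y z : ℝ) : ℝ := Gamma y * Gamma z / Gamma (y + z)

/-- The regularized incomplete beta function `I(κ; y, z)`. -/
noncomputable def regIncBeta (κ y z : ℝ) : ℝ :=
  (∫ s in (0:ℝ)..κ, s ^ (y - 1) * (1 - s) ^ (z - 1)) / realBeta y z

/-- The uniform (rotation-invariant, normalized surface) probability measure on
the unit sphere of `ℝⁿ`. -/
noncomputable def uniformSphere (n : ℕ) :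
    Measure (Metric.sphere (0 : EuclideanSpace ℝ (Fin n)) 1) :=
  ((volume : Measure (EuclideanSpace ℝ (Fin n))).toSphere Set.univ)⁻¹ •
    (volume : Measure (EuclideanSpace ℝ (Fin n))).toSphere

/-!
For a unit vector `w`, some hyperplane orthogonal to `w` separates the two balls iff
`p + r ≤ |⟪w, c - x⟫|`, and then the one through `v` does. With `θ` the angle between `w` and
`c - x` this says `sin² θ ≤ 1 - ((p + r) / ‖c - x‖)²`, so it suffices to show that `sin² θ` is
`Beta((n - 1) / 2, 1 / 2)`-distributed.

Since `sin² θ` is homogeneous of degree `0`, its law on the sphere is, up to a factor, its law on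
the unit ball. Write a point of the ball as `(t, t z)` with `t` its component along `c - x`.
Integrating out `t` leaves a density proportional to `(1 + ‖z‖²) ^ (-n / 2)`, and
`sin² θ = ‖z‖² / (1 + ‖z‖²)`; polar coordinates for `z` and the substitution `s = ρ² / (1 + ρ²)`
turn this density into that of the Beta distribution. The normalizing
constants agree because both laws are probability measures.
-/

open Set Module InnerProductGeometry ProbabilityTheory
open scoped ENNReal

section Polar

theorem lintegral_volumeIoiPow (n : ℕ) (f : ℝ → ℝ≥0∞) :
    ∫⁻ r : Ioi (0 : ℝ), f r ∂Measure.volumeIoiPow n =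
      ∫⁻ r in Ioi (0 : ℝ), ENNReal.ofReal (r ^ n) * f r := by
  rw [Measure.volumeIoiPow, lintegral_withDensity_eq_lintegral_mul_non_measurable _ (by fun_prop)
    (.of_forall fun _ ↦ ENNReal.ofReal_lt_top)]
  exact lintegral_subtype_comap measurableSet_Ioi fun r ↦ ENNReal.ofReal (r ^ n) * f r

theorem setLIntegral_Ioo_pow (n : ℕ) {a : ℝ} (ha : 0 ≤ a) :
    ∫⁻ r in Ioo 0 a, ENNReal.ofReal (r ^ n) = ENNReal.ofReal (a ^ (n + 1) / (n + 1)) := by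
  rw [setLIntegral_congr Ioo_ae_eq_Ioc, ← ofReal_integral_eq_lintegral_ofReal
    (intervalIntegral.intervalIntegrable_pow _).1, ← intervalIntegral.integral_of_le ha]
  · simp
  · filter_upwards [ae_restrict_mem measurableSet_Ioc] with r hr
    exact pow_nonneg hr.1.le _

variable {E : Type*} [NormedAddCommGroup E] [NormedSpace ℝ E] [FiniteDimensional ℝ E]
  [Nontrivial E] [MeasurableSpace E] [BorelSpace E] (μ : Measure E) [μ.IsAddHaarMeasure]

theorem lintegral_eq_lintegral_toSphere {f : E → ℝ≥0∞} (hf : Measurable f) :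
    ∫⁻ x, f x ∂μ = ∫⁻ w, (∫⁻ r in Ioi (0 : ℝ),
      ENNReal.ofReal (r ^ (finrank ℝ E - 1)) * f (r • (w : E))) ∂μ.toSphere := by
  have hmeas : Measurable fun q : sphere (0 : E) 1 × Ioi (0 : ℝ) ↦ f ((q.2 : ℝ) • (q.1 : E)) := by
    fun_prop
  calc ∫⁻ x, f x ∂μ = ∫⁻ x : ({0}ᶜ : Set E), f x ∂μ.comap (↑) := by
        rw [lintegral_subtype_comap (measurableSet_singleton 0).compl, restrict_compl_singleton]
    _ = ∫⁻ q, f ((q.2 : ℝ) • (q.1 : E)) ∂μ.toSphere.prod (.volumeIoiPow (finrank ℝ E - 1)) := by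
        rw [← μ.measurePreserving_homeomorphUnitSphereProd.lintegral_comp hmeas]
        refine lintegral_congr fun x ↦ ?_
        have hx : (x : E) ≠ 0 := x.2
        simp [hx]
    _ = _ := by
        rw [lintegral_prod _ hmeas.aemeasurable]
        exact lintegral_congr fun w ↦ lintegral_volumeIoiPow _ fun r ↦ f (r • (w : E))

theorem lintegral_fun_norm {f : ℝ → ℝ≥0∞} (hf : Measurable f) :
    ∫⁻ x, f ‖x‖ ∂μ =
      finrank ℝ E * μ (ball 0 1) *
        ∫⁻ r in Ioi (0 : ℝ), ENNReal.ofReal (r ^ (finrank ℝ E - 1)) * f r := by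
  rw [lintegral_eq_lintegral_toSphere μ (by fun_prop), ← μ.toSphere_apply_univ,
    mul_comm, ← lintegral_const]
  refine lintegral_congr fun w ↦ setLIntegral_congr_fun measurableSet_Ioi fun r hr ↦ ?_
  rw [mem_Ioi] at hr
  simp [norm_smul, abs_of_pos hr]

theorem lintegral_toSphere_of_homogeneous {f : E → ℝ≥0∞} (hf : Measurable f)
    (hom : ∀ r : ℝ, 0 < r → ∀ u, f (r • u) = f u) :
    ∫⁻ w, f w ∂μ.toSphere = finrank ℝ E * ∫⁻ u in ball 0 1, f u ∂μ := by
  have hdim : 0 < finrank ℝ E := finrank_pos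
  have hradial (w : sphere (0 : E) 1) :
      ∫⁻ r in Ioi (0 : ℝ), ENNReal.ofReal (r ^ (finrank ℝ E - 1)) *
        (ball 0 1).indicator f (r • (w : E)) = (finrank ℝ E : ℝ≥0∞)⁻¹ * f w := by
    calc _ = ∫⁻ r in Ioo (0 : ℝ) 1, ENNReal.ofReal (r ^ (finrank ℝ E - 1)) * f w := by
          rw [← Ioi_inter_Iio, inter_comm, ← setLIntegral_indicator measurableSet_Iio]
          refine setLIntegral_congr_fun measurableSet_Ioi fun r hr ↦ ?_
          rw [mem_Ioi] at hr
          simp [indicator, norm_smul, abs_of_pos hr, hom r hr]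
      _ = _ := by
          rw [lintegral_mul_const _ (by fun_prop), setLIntegral_Ioo_pow _ zero_le_one, one_pow,
            Nat.cast_pred hdim, sub_add_cancel, one_div, ENNReal.ofReal_inv_of_pos (by simpa),
            ENNReal.ofReal_natCast]
  rw [← lintegral_indicator measurableSet_ball,
    lintegral_eq_lintegral_toSphere μ (hf.indicator measurableSet_ball),
    lintegral_congr hradial, lintegral_const_mul _ (by fun_prop), ← mul_assoc,
    ENNReal.mul_inv_cancel (by simpa using hdim.ne') (by simp), one_mul]

end Polar

section Gnomonic

variable {F : Type*} [NormedAddCommGroup F] [NormedSpace ℝ F] [FiniteDimensional ℝ F]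
  [MeasurableSpace F] [BorelSpace F] (μ : Measure F) [μ.IsAddHaarMeasure]

theorem lintegral_comp_const_smul (f : F → ℝ≥0∞) {t : ℝ} (ht : t ≠ 0) :
    ENNReal.ofReal (|t| ^ finrank ℝ F) * ∫⁻ z, f (t • z) ∂μ = ∫⁻ z, f z ∂μ := by
  have hpow : 0 < |t| ^ finrank ℝ F := by positivity
  rw [← (measurableEmbedding_const_smul₀ ht).lintegral_map, Measure.map_addHaar_smul μ ht,
    lintegral_smul_measure, smul_eq_mul, ← mul_assoc, ← ENNReal.ofReal_mul hpow.le, abs_inv,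
    abs_pow, mul_inv_cancel₀ hpow.ne', ENNReal.ofReal_one, one_mul]

theorem lintegral_prod_eq_lintegral_smul {f : ℝ × F → ℝ≥0∞} (hf : Measurable f) :
    ∫⁻ q, f q ∂(volume : Measure ℝ).prod μ =
      ∫⁻ z, (∫⁻ t : ℝ, ENNReal.ofReal (|t| ^ finrank ℝ F) * f (t, t • z)) ∂μ := by
  calc
    _ = ∫⁻ t : ℝ, ∫⁻ z, f (t, z) ∂μ := lintegral_prod _ hf.aemeasurable
    _ = ∫⁻ t : ℝ, ∫⁻ z, ENNReal.ofReal (|t| ^ finrank ℝ F) * f (t, t • z) ∂μ := by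
      refine lintegral_congr_ae ?_
      filter_upwards [Measure.ae_ne volume (0 : ℝ)] with t ht
      rw [lintegral_const_mul _ (by fun_prop), lintegral_comp_const_smul μ (fun z ↦ f (t, z)) ht]
    _ = _ := lintegral_lintegral_swap (by fun_prop)

theorem setLIntegral_abs_pow (n : ℕ) {A : ℝ} (hA : 0 < A) :
    ∫⁻ t in {t : ℝ | t ^ 2 * A < 1}, ENNReal.ofReal (|t| ^ n) =
      ENNReal.ofReal (2 / (n + 1) * A ^ (-((n + 1) / 2 : ℝ))) := by
  have hlt (t : ℝ) : t ^ 2 * A < 1 ↔ |t| < √A⁻¹ := by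
    rw [Real.lt_sqrt (abs_nonneg t), sq_abs, ← one_div, lt_div_iff₀ hA]
  have hpow : √A⁻¹ ^ (n + 1) = A ^ (-((n + 1) / 2 : ℝ)) := by
    rw [Real.sqrt_eq_rpow, ← Real.rpow_mul_natCast (by positivity), Real.inv_rpow hA.le,
      ← Real.rpow_neg hA.le]
    push_cast
    ring_nf
  calc
    _ = ∫⁻ t : ℝ, (Iio √A⁻¹).indicator (fun r ↦ ENNReal.ofReal (r ^ n)) ‖t‖ := by
      rw [← lintegral_indicator (measurableSet_lt (by fun_prop) (by fun_prop))]
      simp [indicator, hlt]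
    _ = 2 * ∫⁻ r in Ioo 0 √A⁻¹, ENNReal.ofReal (r ^ n) := by
      rw [lintegral_fun_norm volume (Measurable.indicator (by fun_prop) measurableSet_Iio),
        ← Ioi_inter_Iio, inter_comm, ← setLIntegral_indicator measurableSet_Iio]
      simp
    _ = _ := by
      rw [setLIntegral_Ioo_pow _ (by positivity), hpow, ← ENNReal.ofReal_ofNat 2,
        ← ENNReal.ofReal_mul zero_le_two, div_mul_eq_mul_div, mul_div_assoc]

theorem setLIntegral_prod_of_homogeneous {f : ℝ × F → ℝ≥0∞} (hf : Measurable f)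
    (hom : ∀ t : ℝ, t ≠ 0 → ∀ q, f (t • q) = f q) :
    ∫⁻ q in {q : ℝ × F | q.1 ^ 2 + ‖q.2‖ ^ 2 < 1}, f q ∂(volume : Measure ℝ).prod μ =
      ∫⁻ z, ENNReal.ofReal (2 / (finrank ℝ F + 1) *
        (1 + ‖z‖ ^ 2) ^ (-((finrank ℝ F + 1) / 2 : ℝ))) * f (1, z) ∂μ := by
  have hmeas : MeasurableSet {q : ℝ × F | q.1 ^ 2 + ‖q.2‖ ^ 2 < 1} :=
    measurableSet_lt (by fun_prop) (by fun_prop)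
  rw [← lintegral_indicator hmeas, lintegral_prod_eq_lintegral_smul μ (hf.indicator hmeas)]
  refine lintegral_congr fun z ↦ ?_
  have hA : 0 < 1 + ‖z‖ ^ 2 := by positivity
  rw [← setLIntegral_abs_pow _ hA, ← lintegral_mul_const _ (by fun_prop),
    ← lintegral_indicator (measurableSet_lt (by fun_prop) (by fun_prop))]
  refine lintegral_congr_ae ?_
  filter_upwards [Measure.ae_ne volume (0 : ℝ)] with t ht
  have hft : f (t, t • z) = f (1, z) := by simpa using hom t ht (1, z)
  have hball : t ^ 2 + ‖t • z‖ ^ 2 = t ^ 2 * (1 + ‖z‖ ^ 2) := by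
    rw [norm_smul, Real.norm_eq_abs, mul_pow, sq_abs]; ring
  simp [indicator, hft, hball]

end Gnomonic

section Beta

theorem hasDerivAt_sq_div_one_add_sq (ρ : ℝ) :
    HasDerivAt (fun ρ : ℝ ↦ ρ ^ 2 / (1 + ρ ^ 2)) (2 * ρ / (1 + ρ ^ 2) ^ 2) ρ := by
  have hsq : HasDerivAt (fun ρ : ℝ ↦ ρ ^ 2) (2 * ρ) ρ := by simpa using hasDerivAt_pow 2 ρ
  refine (hsq.fun_div (hsq.const_add 1) (by positivity)).congr_deriv ?_
  ring

theorem bijOn_sq_div_one_add_sq :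
    BijOn (fun ρ : ℝ ↦ ρ ^ 2 / (1 + ρ ^ 2)) (Ioi 0) (Ioo 0 1) := by
  refine ⟨fun ρ (hρ : 0 < ρ) ↦ ⟨by positivity, ?_⟩, fun a ha b hb hab ↦ ?_,
    fun s ⟨hs0, hs1⟩ ↦ ⟨√(s / (1 - s)), ?_, ?_⟩⟩
  · exact (div_lt_one (by positivity)).2 (by linarith)
  · rw [mem_Ioi] at ha hb
    have hsq := (div_eq_div_iff (by positivity) (by positivity)).1 hab
    exact (sq_eq_sq₀ ha.le hb.le).1 (by linarith)
  · exact Real.sqrt_pos.2 (div_pos hs0 (by linarith))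
  · have h1s : 0 < 1 - s := by linarith
    simp only [Real.sq_sqrt (div_pos hs0 h1s).le]
    field_simp
    ring

theorem abs_deriv_mul_beta_integrand (a b : ℝ) {ρ : ℝ} (hρ : 0 < ρ) :
    |2 * ρ / (1 + ρ ^ 2) ^ 2| * ((ρ ^ 2 / (1 + ρ ^ 2)) ^ (a - 1) *
        (1 - ρ ^ 2 / (1 + ρ ^ 2)) ^ (b - 1)) =
      2 * (ρ ^ (2 * a - 1) * (1 + ρ ^ 2) ^ (-(a + b))) := by
  have hA : 0 < 1 + ρ ^ 2 := by positivity
  have hcompl : 1 - ρ ^ 2 / (1 + ρ ^ 2) = (1 + ρ ^ 2)⁻¹ := by field_simp; ring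
  have hρpow : ρ ^ (2 * a - 1) = ρ * (ρ ^ 2) ^ (a - 1) := by
    rw [show 2 * a - 1 = 1 + 2 * (a - 1) by ring, Real.rpow_add hρ, Real.rpow_one,
      Real.rpow_mul hρ.le, Real.rpow_two]
  have hApow : (1 + ρ ^ 2) ^ (-(a + b)) =
      ((1 + ρ ^ 2) ^ 2)⁻¹ * ((1 + ρ ^ 2) ^ (a - 1))⁻¹ * ((1 + ρ ^ 2) ^ (b - 1))⁻¹ := by
    rw [show -(a + b) = -2 + -(a - 1) + -(b - 1) by ring, Real.rpow_add hA, Real.rpow_add hA,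
      Real.rpow_neg hA.le, Real.rpow_neg hA.le, Real.rpow_neg hA.le, Real.rpow_two]
  rw [hcompl, abs_of_pos (by positivity), Real.div_rpow (by positivity) hA.le,
    Real.inv_rpow hA.le, hρpow, hApow]
  ring

theorem lintegral_betaMeasure (a b : ℝ) (f : ℝ → ℝ≥0∞) :
    ∫⁻ s, f s ∂betaMeasure a b =
      ∫⁻ s in Ioo 0 1, betaPDF a b s * f s := by
  have hsupp : (fun s ↦ betaPDF a b s * f s) =
      (Ioo 0 1).indicator fun s ↦ betaPDF a b s * f s := by
    refine (indicator_eq_self.2 <| Function.support_subset_iff'.2 fun s hs ↦ ?_).symm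
    rw [mem_Ioo, not_and_or, not_lt, not_lt] at hs
    rcases hs with hs | hs
    · rw [betaPDF_eq_zero_of_nonpos hs, zero_mul]
    · rw [betaPDF_eq_zero_of_one_le hs, zero_mul]
  have hmeas : Measurable (betaPDF a b) := (measurable_betaPDFReal a b).ennreal_ofReal
  rw [betaMeasure, lintegral_withDensity_eq_lintegral_mul_non_measurable _ hmeas
    (.of_forall fun _ ↦ ENNReal.ofReal_lt_top),
    ← lintegral_indicator measurableSet_Ioo, ← hsupp]
  rfl

theorem lintegral_comp_sq_div_one_add_sq {a b : ℝ} (ha : 0 < a) (hb : 0 < b) (f : ℝ → ℝ≥0∞) :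
    ∫⁻ ρ in Ioi (0 : ℝ),
        ENNReal.ofReal (ρ ^ (2 * a - 1) * (1 + ρ ^ 2) ^ (-(a + b))) * f (ρ ^ 2 / (1 + ρ ^ 2)) =
      ENNReal.ofReal (beta a b / 2) * ∫⁻ s, f s ∂betaMeasure a b := by
  have hβ := beta_pos ha hb
  rw [lintegral_betaMeasure, ← bijOn_sq_div_one_add_sq.image_eq,
    lintegral_image_eq_lintegral_abs_deriv_mul measurableSet_Ioi
      (fun ρ _ ↦ (hasDerivAt_sq_div_one_add_sq ρ).hasDerivWithinAt) bijOn_sq_div_one_add_sq.injOn,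
    ← lintegral_const_mul' _ _ ENNReal.ofReal_ne_top]
  refine setLIntegral_congr_fun measurableSet_Ioi fun ρ (hρ : 0 < ρ) ↦ ?_
  obtain ⟨hs0, hs1⟩ := bijOn_sq_div_one_add_sq.mapsTo hρ
  simp only [betaPDF_of_pos_lt_one hs0 hs1, ← mul_assoc]
  rw [← ENNReal.ofReal_mul (by positivity), ← ENNReal.ofReal_mul (by positivity)]
  congr 2
  calc
    _ = 1 / 2 * (|2 * ρ / (1 + ρ ^ 2) ^ 2| * ((ρ ^ 2 / (1 + ρ ^ 2)) ^ (a - 1) *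
        (1 - ρ ^ 2 / (1 + ρ ^ 2)) ^ (b - 1))) := by
      rw [abs_deriv_mul_beta_integrand a b hρ]; ring
    _ = _ := by field_simp

theorem betaMeasure_Iic {a b κ : ℝ} (ha : 0 < a) (hb : 0 < b) (hκ0 : 0 ≤ κ) (hκ1 : κ ≤ 1) :
    betaMeasure a b (Iic κ) = ENNReal.ofReal (regIncBeta κ a b) := by
  have : IsProbabilityMeasure (betaMeasure a b) := isProbabilityMeasureBeta ha hb
  have hpdf {s : ℝ} (hs : s ∈ Ioo 0 κ) :
      betaPDFReal a b s = (beta a b)⁻¹ * (s ^ (a - 1) * (1 - s) ^ (b - 1)) := by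
    rw [betaPDFReal, if_pos ⟨hs.1, hs.2.trans_le hκ1⟩, one_div, mul_assoc]
  have hmeasure : betaMeasure a b (Iic κ) = ∫⁻ s in Ioo 0 κ, betaPDF a b s := by
    rw [betaMeasure, withDensity_apply _ measurableSet_Iic,
      ← setLIntegral_congr Iio_ae_eq_Iic, ← lintegral_indicator measurableSet_Iio,
      ← lintegral_indicator measurableSet_Ioo]
    refine lintegral_congr fun s ↦ ?_
    rcases le_or_gt s 0 with hs | hs
    · simp [indicator, betaPDF_eq_zero_of_nonpos hs]
    · simp [indicator, hs]
  have hnonneg : ∀ᵐ s ∂volume.restrict (Ioo 0 κ), 0 ≤ betaPDFReal a b s :=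
    ae_restrict_of_forall_mem measurableSet_Ioo fun s hs ↦
      (betaPDFReal_pos hs.1 (hs.2.trans_le hκ1) ha hb).le
  rw [← ENNReal.ofReal_toReal (measure_ne_top (betaMeasure a b) (Iic κ))]
  congr 1
  calc
    (betaMeasure a b (Iic κ)).toReal = ∫ s in Ioo 0 κ, betaPDFReal a b s := by
      rw [integral_eq_lintegral_of_nonneg_ae hnonneg (by fun_prop), hmeasure]
      rfl
    _ = regIncBeta κ a b := by
      rw [setIntegral_congr_fun measurableSet_Ioo fun s ↦ hpdf, integral_const_mul,
        ← integral_Ioc_eq_integral_Ioo, ← intervalIntegral.integral_of_le hκ0, mul_comm,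
        ← div_eq_mul_inv]
      rfl

end Beta

theorem exists_linearIsometryEquiv_map_eq {E E' : Type*}
    [NormedAddCommGroup E] [InnerProductSpace ℝ E] [FiniteDimensional ℝ E]
    [NormedAddCommGroup E'] [InnerProductSpace ℝ E'] [FiniteDimensional ℝ E']
    (hdim : finrank ℝ E = finrank ℝ E') {x : E} {y : E'} (hxy : ‖x‖ = ‖y‖) :
    ∃ L : E ≃ₗᵢ[ℝ] E', L x = y := by
  let L := (stdOrthonormalBasis ℝ E).equiv (stdOrthonormalBasis ℝ E') (finCongr hdim)
  exact ⟨L.trans (Submodule.reflection (ℝ ∙ (L x - y))ᗮ),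
    Submodule.reflection_sub (by rw [L.norm_map, hxy])⟩

section Angle

variable {E : Type*} [NormedAddCommGroup E] [InnerProductSpace ℝ E]

theorem sin_sq_angle_smul_left {t : ℝ} (ht : t ≠ 0) (u v : E) :
    sin (angle (t • u) v) ^ 2 = sin (angle u v) ^ 2 := by
  rcases ht.lt_or_gt with ht | ht
  · rw [angle_smul_left_of_neg _ _ ht, angle_neg_left, Real.sin_pi_sub]
  · rw [angle_smul_left_of_pos _ _ ht]

theorem sin_sq_angle_toLp_one (z : E) :
    sin (angle (WithLp.toLp 2 ((1 : ℝ), z)) (WithLp.toLp 2 (1, 0))) ^ 2 =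
      ‖z‖ ^ 2 / (1 + ‖z‖ ^ 2) := by
  rw [Real.sin_sq, cos_angle, div_pow, mul_pow, WithLp.prod_norm_sq_eq_of_L2,
    WithLp.prod_norm_sq_eq_of_L2]
  simp only [WithLp.prod_inner_apply, WithLp.toLp_fst, WithLp.toLp_snd, inner_zero_right,
    real_inner_self_eq_norm_sq, norm_one, norm_zero]
  field_simp
  ring

theorem sin_sq_angle_le_iff {w e : E} (hw : ‖w‖ = 1) (he : e ≠ 0) {t : ℝ} (ht : 0 ≤ t) :
    sin (angle w e) ^ 2 ≤ 1 - (t / ‖e‖) ^ 2 ↔ t ≤ |⟪w, e⟫| := by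
  rw [Real.sin_sq, sub_le_sub_iff_left, cos_angle, hw, one_mul, sq_le_sq, abs_div, abs_div,
    abs_norm, div_le_div_iff_of_pos_right (norm_pos_iff.2 he), abs_of_nonneg ht]

@[fun_prop]
theorem measurable_angle [MeasurableSpace E] [BorelSpace E] [SecondCountableTopology E]
    {α : Type*} [MeasurableSpace α] {f g : α → E} (hf : Measurable f) (hg : Measurable g) :
    Measurable fun a ↦ angle (f a) (g a) := by
  unfold angle
  fun_prop

end Angle

section Distribution

theorem setLIntegral_ball_eq_setLIntegral_prod {E F : Type*}
    [NormedAddCommGroup E] [InnerProductSpace ℝ E] [FiniteDimensional ℝ E]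
    [MeasurableSpace E] [BorelSpace E]
    [NormedAddCommGroup F] [InnerProductSpace ℝ F] [FiniteDimensional ℝ F]
    [MeasurableSpace F] [BorelSpace F] (L : WithLp 2 (ℝ × F) ≃ₗᵢ[ℝ] E)
    {f : E → ℝ≥0∞} (hf : Measurable f) :
    ∫⁻ u in ball 0 1, f u =
      ∫⁻ q in {q : ℝ × F | q.1 ^ 2 + ‖q.2‖ ^ 2 < 1}, f (L (WithLp.toLp 2 q)) := by
  have hL : MeasurePreserving fun q : ℝ × F ↦ L (WithLp.toLp 2 q) :=
    L.measurePreserving.comp (WithLp.volume_preserving_toLp ℝ F)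
  have hball : (fun q : ℝ × F ↦ L (WithLp.toLp 2 q)) ⁻¹' ball 0 1 =
      {q | q.1 ^ 2 + ‖q.2‖ ^ 2 < 1} := by
    ext q
    rw [mem_preimage, mem_ball_zero_iff, L.norm_map, ← sq_lt_one_iff₀ (norm_nonneg _),
      WithLp.prod_norm_sq_eq_of_L2, Real.norm_eq_abs, sq_abs]
    rfl
  rw [← hL.setLIntegral_comp_preimage measurableSet_ball hf, hball]

theorem lintegral_gnomonic_density_mul {F : Type*}
    [NormedAddCommGroup F] [NormedSpace ℝ F] [FiniteDimensional ℝ F] [Nontrivial F]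
    [MeasurableSpace F] [BorelSpace F] (μ : Measure F) [μ.IsAddHaarMeasure]
    {f : ℝ → ℝ≥0∞} (hf : Measurable f) :
    ∫⁻ z, ENNReal.ofReal (2 / (finrank ℝ F + 1) *
        (1 + ‖z‖ ^ 2) ^ (-((finrank ℝ F + 1) / 2 : ℝ))) * f (‖z‖ ^ 2 / (1 + ‖z‖ ^ 2)) ∂μ =
      ENNReal.ofReal (2 / (finrank ℝ F + 1)) * (finrank ℝ F * μ (ball 0 1)) *
        ENNReal.ofReal (beta (finrank ℝ F / 2) (1 / 2) / 2) *
          ∫⁻ s, f s ∂betaMeasure (finrank ℝ F / 2) (1 / 2) := by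
  have hdim : 0 < finrank ℝ F := finrank_pos
  have hexp : 2 * (finrank ℝ F / 2 : ℝ) - 1 = (finrank ℝ F - 1 : ℕ) := by
    rw [Nat.cast_pred hdim]; ring
  have hradial {ρ : ℝ} (hρ : 0 < ρ) :
      ENNReal.ofReal (ρ ^ (finrank ℝ F - 1)) *
          (ENNReal.ofReal (2 / (finrank ℝ F + 1) *
            (1 + ρ ^ 2) ^ (-((finrank ℝ F + 1) / 2 : ℝ))) * f (ρ ^ 2 / (1 + ρ ^ 2))) =
        ENNReal.ofReal (2 / (finrank ℝ F + 1)) *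
          (ENNReal.ofReal (ρ ^ (2 * (finrank ℝ F / 2 : ℝ) - 1) *
            (1 + ρ ^ 2) ^ (-(finrank ℝ F / 2 + 1 / 2 : ℝ))) * f (ρ ^ 2 / (1 + ρ ^ 2))) := by
    rw [← mul_assoc, ← mul_assoc, ← ENNReal.ofReal_mul (by positivity),
      ← ENNReal.ofReal_mul (by positivity), hexp, Real.rpow_natCast, ← add_div, mul_left_comm]
  rw [lintegral_fun_norm μ (f := fun ρ ↦ ENNReal.ofReal (2 / (finrank ℝ F + 1) *
      (1 + ρ ^ 2) ^ (-((finrank ℝ F + 1) / 2 : ℝ))) * f (ρ ^ 2 / (1 + ρ ^ 2))) (by fun_prop),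
    setLIntegral_congr_fun measurableSet_Ioi fun ρ ↦ hradial,
    lintegral_const_mul' _ _ ENNReal.ofReal_ne_top,
    lintegral_comp_sq_div_one_add_sq (by positivity) one_half_pos]
  ring

theorem setLIntegral_prod_sin_sq_angle {F : Type*}
    [NormedAddCommGroup F] [InnerProductSpace ℝ F] [FiniteDimensional ℝ F] [Nontrivial F]
    [MeasurableSpace F] [BorelSpace F] {f : ℝ → ℝ≥0∞} (hf : Measurable f) :
    ∫⁻ q in {q : ℝ × F | q.1 ^ 2 + ‖q.2‖ ^ 2 < 1},
        f (sin (angle (WithLp.toLp 2 q) (WithLp.toLp 2 (1, 0))) ^ 2) =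
      ENNReal.ofReal (2 / (finrank ℝ F + 1)) * (finrank ℝ F * volume (ball (0 : F) 1)) *
        ENNReal.ofReal (beta (finrank ℝ F / 2) (1 / 2) / 2) *
          ∫⁻ s, f s ∂betaMeasure (finrank ℝ F / 2) (1 / 2) := by
  rw [Measure.volume_eq_prod,
    setLIntegral_prod_of_homogeneous volume (by fun_prop) fun t ht q ↦ by
      rw [WithLp.toLp_smul, sin_sq_angle_smul_left ht]]
  simp only [sin_sq_angle_toLp_one]
  exact lintegral_gnomonic_density_mul volume hf

variable {E : Type*} [NormedAddCommGroup E] [InnerProductSpace ℝ E] [FiniteDimensional ℝ E]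
  [MeasurableSpace E] [BorelSpace E]

theorem exists_map_sin_sq_angle_toSphere_eq_smul (hdim : 2 ≤ finrank ℝ E) {e : E} (he : e ≠ 0) :
    ∃ K : ℝ≥0∞,
      (volume : Measure E).toSphere.map (fun w : sphere (0 : E) 1 ↦ sin (angle (w : E) e) ^ 2) =
        K • betaMeasure ((finrank ℝ E - 1) / 2) (1 / 2) := by
  obtain ⟨m, hm⟩ := Nat.exists_eq_add_of_le hdim
  have : Nontrivial E := nontrivial_of_finrank_pos (R := ℝ) (by omega)
  let F := EuclideanSpace ℝ (Fin (m + 1))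
  have hF : (finrank ℝ F : ℝ) = finrank ℝ E - 1 := by
    rw [finrank_euclideanSpace_fin, hm]; push_cast; ring
  have hdimF : finrank ℝ (WithLp 2 (ℝ × F)) = finrank ℝ E := by
    rw [(WithLp.linearEquiv 2 ℝ (ℝ × F)).finrank_eq, finrank_prod, finrank_self,
      finrank_euclideanSpace_fin, hm]
    ring
  obtain ⟨L, hL⟩ : ∃ L : WithLp 2 (ℝ × F) ≃ₗᵢ[ℝ] E, L (WithLp.toLp 2 (1, 0)) = ‖e‖⁻¹ • e :=
    exists_linearIsometryEquiv_map_eq hdimF (by simp [norm_smul, he])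
  have hangle (q : WithLp 2 (ℝ × F)) : angle (L q) e = angle q (WithLp.toLp 2 (1, 0)) := by
    rw [← L.toLinearIsometry.angle_map, L.coe_toLinearIsometry, hL,
      angle_smul_right_of_pos _ _ (inv_pos.2 (norm_pos_iff.2 he))]
  refine ⟨finrank ℝ E * (ENNReal.ofReal (2 / (finrank ℝ F + 1)) *
    (finrank ℝ F * volume (ball (0 : F) 1)) * ENNReal.ofReal (beta (finrank ℝ F / 2) (1 / 2) / 2)),
    Measure.ext_of_lintegral _ fun f hf ↦ ?_⟩
  have hmeas : Measurable fun u : E ↦ f (sin (angle u e) ^ 2) := by fun_prop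
  rw [lintegral_map hf (by fun_prop),
    lintegral_toSphere_of_homogeneous volume hmeas fun t ht u ↦ by
      rw [sin_sq_angle_smul_left ht.ne'],
    setLIntegral_ball_eq_setLIntegral_prod L hmeas]
  simp only [hangle]
  rw [setLIntegral_prod_sin_sq_angle hf, ← mul_assoc, ← hF, lintegral_smul_measure, smul_eq_mul]

theorem map_sin_sq_angle_toSphere (hdim : 2 ≤ finrank ℝ E) {e : E} (he : e ≠ 0) :
    (volume : Measure E).toSphere.map (fun w : sphere (0 : E) 1 ↦ sin (angle (w : E) e) ^ 2) =
      (volume : Measure E).toSphere univ • betaMeasure ((finrank ℝ E - 1) / 2) (1 / 2) := by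
  have hdim' : (2 : ℝ) ≤ finrank ℝ E := mod_cast hdim
  have : IsProbabilityMeasure (betaMeasure ((finrank ℝ E - 1) / 2) (1 / 2)) :=
    isProbabilityMeasureBeta (by linarith) one_half_pos
  obtain ⟨K, hK⟩ := exists_map_sin_sq_angle_toSphere_eq_smul hdim he
  have hmass := congrArg (· univ) hK
  simp only [Measure.smul_apply, measure_univ, smul_eq_mul, mul_one] at hmass
  rw [Measure.map_apply (by fun_prop) .univ, preimage_univ] at hmass
  rw [hK, hmass]

theorem map_sin_sq_angle_uniformSphere {n : ℕ} (hn : 2 ≤ n) {e : EuclideanSpace ℝ (Fin n)}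
    (he : e ≠ 0) :
    (uniformSphere n).map (fun w : sphere (0 : EuclideanSpace ℝ (Fin n)) 1 ↦
        sin (angle (w : EuclideanSpace ℝ (Fin n)) e) ^ 2) =
      betaMeasure ((n - 1) / 2) (1 / 2) := by
  have : Nonempty (Fin n) := ⟨⟨0, by omega⟩⟩
  have hmass : (volume : Measure (EuclideanSpace ℝ (Fin n))).toSphere univ ≠ 0 := by
    rw [Measure.toSphere_apply_univ, finrank_euclideanSpace_fin]
    exact mul_ne_zero (mod_cast (by omega : n ≠ 0)) (measure_ball_pos _ _ one_pos).ne'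
  have hdist := map_sin_sq_angle_toSphere (by simpa using hn) he
  rw [finrank_euclideanSpace_fin] at hdist
  rw [uniformSphere, Measure.map_smul, hdist, smul_smul,
    ENNReal.inv_mul_cancel hmass (measure_ne_top _ _), one_smul]

theorem uniformSphere_le_abs_inner {n : ℕ} (hn : 2 ≤ n) {e : EuclideanSpace ℝ (Fin n)}
    (he : e ≠ 0) {t : ℝ} (ht0 : 0 ≤ t) (ht : t ≤ ‖e‖) :
    uniformSphere n {w : sphere (0 : EuclideanSpace ℝ (Fin n)) 1 |
        t ≤ |⟪(w : EuclideanSpace ℝ (Fin n)), e⟫|} =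
      ENNReal.ofReal (regIncBeta (1 - (t / ‖e‖) ^ 2) ((n - 1) / 2) (1 / 2)) := by
  have hn' : (2 : ℝ) ≤ n := mod_cast hn
  have hratio : t / ‖e‖ ≤ 1 := div_le_one_of_le₀ ht (norm_nonneg e)
  have hκ : 0 ≤ 1 - (t / ‖e‖) ^ 2 := sub_nonneg.2 (pow_le_one₀ (by positivity) hratio)
  rw [← betaMeasure_Iic (by linarith) one_half_pos hκ (by linarith [sq_nonneg (t / ‖e‖)]),
    ← map_sin_sq_angle_uniformSphere hn he,
    Measure.map_apply (by fun_prop)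
      measurableSet_Iic]
  congr 1
  ext w
  exact (sin_sq_angle_le_iff (norm_eq_of_mem_sphere w) he ht0).symm

end Distribution

section Separation

section InnerProductSpace

variable {E : Type*} [NormedAddCommGroup E] [InnerProductSpace ℝ E] {w : E} {r : ℝ}

theorem forall_mem_ball_pos_inner_sub_iff (hw : ‖w‖ = 1) (hr : 0 < r) (c : E) (b : ℝ) :
    (∀ u ∈ ball c r, 0 < ⟪w, u⟫ - b) ↔ r ≤ ⟪w, c⟫ - b := by
  refine ⟨fun hpos ↦ ?_, fun hle u hu ↦ ?_⟩
  · by_contra! hlt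
    obtain ⟨s, hs, hsr⟩ := exists_between (max_lt hr hlt)
    obtain ⟨hs0, hsb⟩ := max_lt_iff.1 hs
    have hmem : c - s • w ∈ ball c r := by
      simpa [mem_ball, dist_eq_norm, norm_smul, hw, abs_of_pos hs0] using hsr
    have hval := hpos _ hmem
    rw [inner_sub_right, real_inner_smul_right, real_inner_self_eq_norm_sq, hw] at hval
    linarith
  · have hcs : ⟪w, c - u⟫ ≤ ‖c - u‖ := by simpa [hw] using real_inner_le_norm w (c - u)
    rw [mem_ball', dist_eq_norm] at hu
    rw [inner_sub_right] at hcs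
    linarith

theorem forall_mem_ball_inner_sub_neg_iff (hw : ‖w‖ = 1) (hr : 0 < r) (c : E) (b : ℝ) :
    (∀ u ∈ ball c r, ⟪w, u⟫ - b < 0) ↔ r ≤ b - ⟪w, c⟫ := by
  have hneg := forall_mem_ball_pos_inner_sub_iff (w := -w) (by rwa [norm_neg]) hr c (-b)
  simpa only [inner_neg_left, neg_sub_neg, sub_pos, sub_neg] using hneg

end InnerProductSpace

variable {n : ℕ} {w : EuclideanSpace ℝ (Fin n)} {r p : ℝ}

theorem separates_iff (hw : ‖w‖ = 1) (hr : 0 < r) (hp : 0 < p) (b : ℝ)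
    (c x : EuclideanSpace ℝ (Fin n)) :
    Separates w b c r x p ↔
      (r ≤ ⟪w, c⟫ - b ∧ p ≤ b - ⟪w, x⟫) ∨ (r ≤ b - ⟪w, c⟫ ∧ p ≤ ⟪w, x⟫ - b) := by
  simp only [Separates, forall_mem_ball_pos_inner_sub_iff hw hr,
    forall_mem_ball_pos_inner_sub_iff hw hp, forall_mem_ball_inner_sub_neg_iff hw hr,
    forall_mem_ball_inner_sub_neg_iff hw hp]

theorem Separates.add_le_abs_inner_sub {b : ℝ} {c x : EuclideanSpace ℝ (Fin n)}
    (h : Separates w b c r x p) (hw : ‖w‖ = 1) (hr : 0 < r) (hp : 0 < p) :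
    p + r ≤ |⟪w, c - x⟫| := by
  rw [inner_sub_right, le_abs]
  rcases (separates_iff hw hr hp b c x).1 h with ⟨hc, hx⟩ | ⟨hc, hx⟩
  · left; linarith
  · right; linarith

theorem separates_inner_weighted_center (hw : ‖w‖ = 1) (hr : 0 < r) (hp : 0 < p)
    {c x : EuclideanSpace ℝ (Fin n)} (h : p + r ≤ |⟪w, c - x⟫|) :
    Separates w ⟪w, (p / (p + r)) • c + (r / (p + r)) • x⟫ c r x p := by
  have hpr : 0 < p + r := add_pos hp hr
  set v := (p / (p + r)) • c + (r / (p + r)) • x with hv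
  have hcv : ⟪w, c⟫ - ⟪w, v⟫ = r * (⟪w, c - x⟫ / (p + r)) := by
    simp only [hv, inner_add_right, inner_sub_right, real_inner_smul_right]
    field_simp
    ring
  have hvx : ⟪w, v⟫ - ⟪w, x⟫ = p * (⟪w, c - x⟫ / (p + r)) := by
    simp only [hv, inner_add_right, inner_sub_right, real_inner_smul_right]
    field_simp
    ring
  rw [separates_iff hw hr hp, ← neg_sub ⟪w, c⟫ ⟪w, v⟫, ← neg_sub ⟪w, v⟫ ⟪w, x⟫, hcv, hvx]
  simp only [← mul_neg, le_mul_iff_one_le_right hr, le_mul_iff_one_le_right hp, and_self,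
    ← neg_div, one_le_div hpr]
  exact le_abs.1 h

theorem separates_inner_weighted_center_iff (hw : ‖w‖ = 1) (hr : 0 < r) (hp : 0 < p)
    {c x : EuclideanSpace ℝ (Fin n)} :
    Separates w ⟪w, (p / (p + r)) • c + (r / (p + r)) • x⟫ c r x p ↔ p + r ≤ |⟪w, c - x⟫| :=
  ⟨fun h ↦ h.add_le_abs_inner_sub hw hr hp, separates_inner_weighted_center hw hr hp⟩

theorem exists_separates_iff (hw : ‖w‖ = 1) (hr : 0 < r) (hp : 0 < p)
    {c x : EuclideanSpace ℝ (Fin n)} :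
    (∃ b, Separates w b c r x p) ↔ p + r ≤ |⟪w, c - x⟫| :=
  ⟨fun ⟨_, h⟩ ↦ h.add_le_abs_inner_sub hw hr hp,
    fun h ↦ ⟨_, separates_inner_weighted_center hw hr hp h⟩⟩

end Separation

theorem stmt8 (n : ℕ) (hn : 2 ≤ n) (c x : EuclideanSpace ℝ (Fin n)) (r p δ : ℝ)
    (hr : 0 < r) (hp : 0 < p) (hδ : 0 < δ) (hdist : ‖c - x‖ = p + r + δ)
    (Q : ℝ) (hQ : Q = 1 - ((p + r) / (p + r + δ)) ^ 2)
    (v : EuclideanSpace ℝ (Fin n))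
    (hv : v = (p / (p + r)) • c + (r / (p + r)) • x) :
    uniformSphere n {w : Metric.sphere (0 : EuclideanSpace ℝ (Fin n)) 1 |
        ∃ b : ℝ, Separates (w : EuclideanSpace ℝ (Fin n)) b c r x p} =
      ENNReal.ofReal (regIncBeta Q (((n : ℝ) - 1) / 2) (1 / 2)) ∧
    uniformSphere n {w : Metric.sphere (0 : EuclideanSpace ℝ (Fin n)) 1 |
        Separates (w : EuclideanSpace ℝ (Fin n)) ⟪(w : EuclideanSpace ℝ (Fin n)), v⟫ c r x p} =
      ENNReal.ofReal (regIncBeta Q (((n : ℝ) - 1) / 2) (1 / 2)) := by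
  have hpr : 0 < p + r := add_pos hp hr
  have hne : c - x ≠ 0 := norm_pos_iff.1 (by linarith)
  have hprob := uniformSphere_le_abs_inner hn hne hpr.le (by linarith)
  rw [hQ, hv, ← hdist, ← hprob]
  constructor <;> congr 1 <;> ext w
  · exact exists_separates_iff (norm_eq_of_mem_sphere w) hr hp
  · exact separates_inner_weighted_center_iff (norm_eq_of_mem_sphere w) hr hp
end

section
/- Let n ≥ 2 and α ∈ (0, π/2). Then I(cos²α; (n−1)/2, 1/2) · sin α ≤ (cos^{n−1} α) / ( ((n−1)/2) · B((n−1)/2, 1/2) ) ≤ I(cos²α; (n−1)/2, 1/2). -/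
open MeasureTheory Real

/-!
For `z ≤ 1` and `0 < s < κ ≤ 1`, the factor `(1 - s) ^ (z - 1)` of the incomplete beta integrand
is at least `1`, and at most `1` once multiplied by `(1 - κ) ^ (1 - z)`. Both bounds therefore
follow by comparing with `∫ s in 0..κ, s ^ (y - 1) = κ ^ y / y`; the trigonometric form is the
case `κ = cos² α`, `z = 1 / 2`.
-/

section IncompleteBeta

variable {y z κ : ℝ}

lemma realBeta_pos (hy : 0 < y) (hz : 0 < z) : 0 < realBeta y z :=
  ProbabilityTheory.beta_pos hy hz

lemma intervalIntegrable_rpow_mul_one_sub_rpow (hy : 0 < y) (hz : 0 < z)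
    (hκ : κ ∈ Set.Icc 0 1) :
    IntervalIntegrable (fun s : ℝ ↦ s ^ (y - 1) * (1 - s) ^ (z - 1)) volume 0 κ := by
  have complex_integrable : IntervalIntegrable
      (fun s : ℝ ↦ (s : ℂ) ^ ((y : ℂ) - 1) * (1 - (s : ℂ)) ^ ((z : ℂ) - 1)) volume 0 1 :=
    Complex.betaIntegral_convergent (by simpa) (by simpa)
  rw [intervalIntegrable_iff_integrableOn_Ioc_of_le zero_le_one] at complex_integrable
  rw [intervalIntegrable_iff_integrableOn_Ioc_of_le hκ.1]
  have real_integrable : IntegrableOn (fun s : ℝ ↦ s ^ (y - 1) * (1 - s) ^ (z - 1))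
      (Set.Ioc 0 1) := by
    refine IntegrableOn.congr_fun complex_integrable.re (fun s hs ↦ ?_) measurableSet_Ioc
    have ofReal_integrand : (s : ℂ) ^ ((y : ℂ) - 1) * (1 - (s : ℂ)) ^ ((z : ℂ) - 1) =
        ((s ^ (y - 1) * (1 - s) ^ (z - 1) : ℝ) : ℂ) := by
      push_cast [Complex.ofReal_cpow hs.1.le, Complex.ofReal_cpow (sub_nonneg.2 hs.2)]
      rfl
    simp only [ofReal_integrand, RCLike.re_to_complex, Complex.ofReal_re]
  exact real_integrable.mono_set (Set.Ioc_subset_Ioc_right hκ.2)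

lemma intervalIntegrable_rpow_sub_one (hy : 0 < y) :
    IntervalIntegrable (fun s : ℝ ↦ s ^ (y - 1)) volume 0 κ :=
  intervalIntegral.intervalIntegrable_rpow' (by linarith)

lemma integral_rpow_sub_one (hy : 0 < y) : ∫ s in (0 : ℝ)..κ, s ^ (y - 1) = κ ^ y / y := by
  rw [integral_rpow (Or.inl (by linarith)), sub_add_cancel, zero_rpow hy.ne', sub_zero]

lemma rpow_div_le_integral_rpow_mul_one_sub_rpow (hy : 0 < y) (hz : z ∈ Set.Ioc 0 1)
    (hκ : κ ∈ Set.Icc 0 1) :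
    κ ^ y / y ≤ ∫ s in (0 : ℝ)..κ, s ^ (y - 1) * (1 - s) ^ (z - 1) := by
  rw [← integral_rpow_sub_one hy]
  refine intervalIntegral.integral_mono_on_of_le_Ioo hκ.1 (intervalIntegrable_rpow_sub_one hy)
    (intervalIntegrable_rpow_mul_one_sub_rpow hy hz.1 hκ) fun s hs ↦ ?_
  have one_le_factor : 1 ≤ (1 - s) ^ (z - 1) :=
    one_le_rpow_of_pos_of_le_one_of_nonpos (by linarith [hs.2, hκ.2]) (by linarith [hs.1])
      (by linarith [hz.2])
  exact le_mul_of_one_le_right (rpow_nonneg hs.1.le _) one_le_factor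

lemma integral_rpow_mul_one_sub_rpow_mul_le (hy : 0 < y) (hz : z ∈ Set.Ioc 0 1)
    (hκ : κ ∈ Set.Icc 0 1) :
    (∫ s in (0 : ℝ)..κ, s ^ (y - 1) * (1 - s) ^ (z - 1)) * (1 - κ) ^ (1 - z) ≤ κ ^ y / y := by
  rw [← integral_rpow_sub_one hy, ← intervalIntegral.integral_mul_const]
  refine intervalIntegral.integral_mono_on_of_le_Ioo hκ.1
    ((intervalIntegrable_rpow_mul_one_sub_rpow hy hz.1 hκ).mul_const _)
    (intervalIntegrable_rpow_sub_one hy) fun s hs ↦ ?_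
  have one_sub_pos : 0 < 1 - s := by linarith [hs.2, hκ.2]
  have factor_le_one : (1 - s) ^ (z - 1) * (1 - κ) ^ (1 - z) ≤ 1 :=
    calc (1 - s) ^ (z - 1) * (1 - κ) ^ (1 - z)
        ≤ (1 - s) ^ (z - 1) * (1 - s) ^ (1 - z) := by
          gcongr
          · linarith [hκ.2]
          · linarith [hz.2]
          · exact hs.2.le
      _ = 1 := by rw [← rpow_add one_sub_pos, sub_add_sub_cancel, sub_self, rpow_zero]
  rw [mul_assoc]
  exact mul_le_of_le_one_right (rpow_nonneg hs.1.le _) factor_le_one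

theorem stmt13_general (hy : 0 < y) (hz : z ∈ Set.Ioc 0 1) (hκ : κ ∈ Set.Icc 0 1) :
    regIncBeta κ y z * (1 - κ) ^ (1 - z) ≤ κ ^ y / (y * realBeta y z) ∧
      κ ^ y / (y * realBeta y z) ≤ regIncBeta κ y z := by
  have beta_nonneg := (realBeta_pos hy hz.1).le
  rw [regIncBeta, ← div_div, div_mul_eq_mul_div]
  exact ⟨div_le_div_of_nonneg_right (integral_rpow_mul_one_sub_rpow_mul_le hy hz hκ) beta_nonneg,
    div_le_div_of_nonneg_right (rpow_div_le_integral_rpow_mul_one_sub_rpow hy hz hκ) beta_nonneg⟩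

end IncompleteBeta

lemma sq_rpow_div_two {x : ℝ} (hx : 0 ≤ x) (r : ℝ) : (x ^ 2) ^ (r / 2) = x ^ r := by
  rw [rpow_div_two_eq_sqrt r (sq_nonneg x), sqrt_sq hx]

lemma one_sub_cos_sq_rpow_half {α : ℝ} (hα : 0 ≤ sin α) :
    (1 - cos α ^ 2) ^ (1 - 1 / 2 : ℝ) = sin α := by
  rw [← sin_sq, sub_half, sq_rpow_div_two hα, rpow_one]

theorem stmt13 (n : ℕ) (hn : 2 ≤ n) (α : ℝ) (hα : α ∈ Set.Ioo 0 (π / 2)) :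
    regIncBeta (cos α ^ 2) (((n : ℝ) - 1) / 2) (1 / 2) * sin α ≤
        cos α ^ ((n : ℝ) - 1) /
          ((((n : ℝ) - 1) / 2) * realBeta (((n : ℝ) - 1) / 2) (1 / 2)) ∧
      cos α ^ ((n : ℝ) - 1) /
          ((((n : ℝ) - 1) / 2) * realBeta (((n : ℝ) - 1) / 2) (1 / 2)) ≤
        regIncBeta (cos α ^ 2) (((n : ℝ) - 1) / 2) (1 / 2) := by
  have two_le_n : (2 : ℝ) ≤ n := by exact_mod_cast hn
  have sin_nonneg : 0 ≤ sin α := sin_nonneg_of_nonneg_of_le_pi hα.1.le (by linarith [hα.2, pi_pos])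
  have cos_nonneg : 0 ≤ cos α := cos_nonneg_of_mem_Icc ⟨by linarith [hα.1, pi_pos], hα.2.le⟩
  simpa only [one_sub_cos_sq_rpow_half sin_nonneg, sq_rpow_div_two cos_nonneg] using
    stmt13_general (y := ((n : ℝ) - 1) / 2) (z := 1 / 2) (by linarith) (by norm_num)
      ⟨sq_nonneg _, cos_sq_le_one α⟩
end
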